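/- arXiv:2108.05637 — 2 statements merged into one kernel-verified Lean document; each statement's English description precedes it below -/
import Mathlib

section
/- Let A be a finite cyclic group acting on finite sets X and Y. Suppose that for every natural number d, the number of elements x ∈ X whose stabiliser in A has cardinality d equals the number of elements y ∈ Y whose stabiliser in A has cardinality d. Then there exists an A-equivariant bijection f : X → Y, i.e. a bijection satisfying f(a • x) = a • f(x) for all a ∈ A and x ∈ X. -/
theorem aux_subgroup_eq {A : Type*} [Group A] [Finite A] [IsCyclic A] (H K : Subgroup A)
    (h : Nat.card H = Nat.card K) : H = K := by
  classical
  have := Fintype.ofFinite A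
  have key : ∀ L : Subgroup A, Finset.univ.filter (fun a : A => a ∈ L)
      = Finset.univ.filter (fun a : A => a ^ (Nat.card L) = 1) := by
    intro L
    apply Finset.eq_of_subset_of_card_le
    · intro a ha
      simp only [Finset.mem_filter, Finset.mem_univ, true_and] at ha ⊢
      have := pow_card_eq_one' (x := (⟨a, ha⟩ : L))
      exact congrArg Subtype.val this
    · refine (IsCyclic.card_pow_eq_one_le Nat.card_pos).trans (le_of_eq ?_)
      rw [Nat.card_eq_fintype_card, Fintype.card_subtype]
  have e : Finset.univ.filter (fun a : A => a ∈ H) = Finset.univ.filter (fun a : A => a ∈ K) := by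
    rw [key H, key K, h]
  ext a
  simpa using congrArg (fun s => a ∈ s) e

theorem aux_stab_out {A X : Type*} [Group A] [MulAction A X] (x : X) :
    Nat.card (MulAction.stabilizer A (Quotient.mk (MulAction.orbitRel A X) x).out)
      = Nat.card (MulAction.stabilizer A x) :=
  Nat.card_congr (MulAction.stabilizerEquivStabilizerOfOrbitRel
    (Quotient.mk_out (s := MulAction.orbitRel A X) x)).toEquiv

theorem aux_count {A X : Type*} [Group A] [Finite A] [Finite X] [MulAction A X] (d : ℕ) :
    Nat.card {x : X // Nat.card (MulAction.stabilizer A x) = d} * d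
      = Nat.card {w : Quotient (MulAction.orbitRel A X) //
          Nat.card (MulAction.stabilizer A w.out) = d} * Nat.card A := by
  classical
  let p : {x : X // Nat.card (MulAction.stabilizer A x) = d} →
      {w : Quotient (MulAction.orbitRel A X) // Nat.card (MulAction.stabilizer A w.out) = d} :=
    fun x => ⟨Quotient.mk _ x.1, (aux_stab_out x.1).trans x.2⟩
  have := Fintype.ofFinite {w : Quotient (MulAction.orbitRel A X) //
    Nat.card (MulAction.stabilizer A w.out) = d}
  rw [← Nat.card_congr (Equiv.sigmaFiberEquiv p), Nat.card_sigma, Finset.sum_mul,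
    Finset.sum_congr rfl (g := fun _ => Nat.card A)]
  · rw [Finset.sum_const, Finset.card_univ, smul_eq_mul, ← Nat.card_eq_fintype_card]
  · rintro ⟨w, hw⟩ -
    have e : {x // p x = ⟨w, hw⟩} ≃ MulAction.orbit A w.out :=
      { toFun := fun x => ⟨x.1.1, by
          have h1 : Quotient.mk (MulAction.orbitRel A X) x.1.1 = w := congrArg Subtype.val x.2
          have h2 : Quotient.mk (MulAction.orbitRel A X) x.1.1
            = Quotient.mk (MulAction.orbitRel A X) w.out := by rw [h1, Quotient.out_eq]
          exact Quotient.exact h2⟩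
        invFun := fun x =>
          have h2 : Quotient.mk (MulAction.orbitRel A X) x.1 = w :=
            (Quotient.sound x.2).trans (Quotient.out_eq w)
          ⟨⟨x.1, by rw [← aux_stab_out, h2, hw]⟩, Subtype.ext h2⟩
        left_inv := fun x => rfl
        right_inv := fun x => rfl }
    rw [Nat.card_congr e, Nat.card_congr (MulAction.orbitEquivQuotientStabilizer A w.out)]
    conv_lhs => rw [← hw]
    exact (Subgroup.card_eq_card_quotient_mul_card_subgroup _).symm

/-- Let a finite cyclic group `A` act on finite sets `X` and `Y`. If for every `d` the number
of points of `X` whose stabiliser has cardinality `d` equals the number of such points of `Y`,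
then there is an `A`-equivariant bijection `X ≃ Y`. -/
theorem exists_equivariant_bijection_of_card_stabilizer_eq
    (A X Y : Type*) [Group A] [Finite A] [IsCyclic A]
    [Finite X] [Finite Y] [MulAction A X] [MulAction A Y]
    (h : ∀ d : ℕ,
      Nat.card {x : X // Nat.card (MulAction.stabilizer A x) = d}
        = Nat.card {y : Y // Nat.card (MulAction.stabilizer A y) = d}) :
    ∃ f : X ≃ Y, ∀ (a : A) (x : X), f (a • x) = a • f x := by
  classical
  have hcard : ∀ d : ℕ, Nat.card {w : Quotient (MulAction.orbitRel A X) //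
          Nat.card (MulAction.stabilizer A w.out) = d}
      = Nat.card {w : Quotient (MulAction.orbitRel A Y) //
          Nat.card (MulAction.stabilizer A w.out) = d} := fun d => by
    apply Nat.eq_of_mul_eq_mul_right (Nat.card_pos (α := A))
    rw [← aux_count, ← aux_count, h]
  let e : Quotient (MulAction.orbitRel A X) ≃ Quotient (MulAction.orbitRel A Y) :=
    Equiv.ofFiberEquiv (f := fun w => Nat.card (MulAction.stabilizer A w.out))
      (g := fun w => Nat.card (MulAction.stabilizer A w.out))
      (fun d => (Finite.card_eq.1 (hcard d)).some)
  have he : ∀ w, MulAction.stabilizer A (e w).out = MulAction.stabilizer A w.out := fun w =>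
    aux_subgroup_eq _ _ (Equiv.ofFiberEquiv_map
      (f := fun w : Quotient (MulAction.orbitRel A X) =>
        Nat.card (MulAction.stabilizer A w.out))
      (g := fun w : Quotient (MulAction.orbitRel A Y) =>
        Nat.card (MulAction.stabilizer A w.out)) _ w)
  have hiff : ∀ w (a b : A), a • (e w).out = b • (e w).out ↔ a • w.out = b • w.out := by
    intro w a b
    have := congrArg (fun S => b⁻¹ * a ∈ S) (he w)
    simpa [MulAction.mem_stabilizer_iff, mul_smul, inv_smul_eq_iff] using this
  have hg : ∀ x : X, ∃ a : A, a • (Quotient.mk (MulAction.orbitRel A X) x).out = x := fun x =>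
    (MulAction.orbitRel A X).symm (Quotient.mk_out (s := MulAction.orbitRel A X) x)
  choose g hg using hg
  have hmk : ∀ (a : A) (x : X), Quotient.mk (MulAction.orbitRel A X) (a • x) =
      Quotient.mk (MulAction.orbitRel A X) x := fun a x => Quotient.sound ⟨a, rfl⟩
  have hmk' : ∀ (a : A) (x : Y), Quotient.mk (MulAction.orbitRel A Y) (a • x) =
      Quotient.mk (MulAction.orbitRel A Y) x := fun a x => Quotient.sound ⟨a, rfl⟩
  let f : X → Y := fun x => g x • (e (Quotient.mk (MulAction.orbitRel A X) x)).out
  -- the value of `f` on a translate of a chosen representative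
  have hf : ∀ w (a : A), f (a • w.out) = a • (e w).out := by
    intro w a
    have h1 : Quotient.mk (MulAction.orbitRel A X) (a • w.out) = w := by
      rw [hmk, Quotient.out_eq]
    have h2 := hg (a • w.out)
    simp only [f]
    rw [h1] at h2 ⊢
    exact (hiff w _ _).2 h2
  have hinj : Function.Injective f := by
    intro x y hxy
    have hw : Quotient.mk (MulAction.orbitRel A X) x = Quotient.mk (MulAction.orbitRel A X) y := by
      have := congrArg (Quotient.mk (MulAction.orbitRel A Y)) hxy
      simp only [f, hmk', Quotient.out_eq] at this
      exact e.injective this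
    have hx := hg x
    have hy := hg y
    simp only [f] at hxy
    rw [← hw] at hxy hy
    rw [← hx, ← hy]
    exact (hiff _ _ _).1 hxy
  have hsurj : Function.Surjective f := by
    intro y
    obtain ⟨b, hb⟩ : ∃ b : A, b • (Quotient.mk (MulAction.orbitRel A Y) y).out = y :=
      (MulAction.orbitRel A Y).symm (Quotient.mk_out (s := MulAction.orbitRel A Y) y)
    refine ⟨b • (e.symm (Quotient.mk (MulAction.orbitRel A Y) y)).out, ?_⟩
    rw [hf, Equiv.apply_symm_apply, hb]
  refine ⟨Equiv.ofBijective f ⟨hinj, hsurj⟩, fun a x => ?_⟩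
  change f (a • x) = a • f x
  conv_lhs => rw [← hg x, smul_smul, hf, mul_smul]
end

section
/- Let G be a finite group, N a normal subgroup of G whose index [G : N] is a power of 2, and let V be a finite-dimensional complex representation of G that is irreducible and whose dimension is odd. Then the restriction of V to N is an irreducible representation of N. -/
/-- A representation `ρ` of a group on a `k`-module `V` is irreducible if `V` is nonzero and
the only `ρ`-invariant submodules of `V` are `⊥` and `⊤`. -/
def IsIrreducibleRep {k G V : Type*} [CommSemiring k] [Monoid G] [AddCommMonoid V]
    [Module k V] (ρ : Representation k G V) : Prop :=
  (∃ v : V, v ≠ 0) ∧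
    ∀ W : Submodule k V, (∀ (g : G), ∀ v ∈ W, ρ g v ∈ W) → W = ⊥ ∨ W = ⊤

/-- The index two case. -/
theorem irreducible_index_two {G : Type*} [Group G] (H : Subgroup G) (hH : H.index = 2)
    {V : Type*} [AddCommGroup V] [Module ℂ V] [FiniteDimensional ℂ V]
    (ρ : Representation ℂ G V)
    (hirr : IsIrreducibleRep ρ) (hodd : Odd (Module.finrank ℂ V)) :
    IsIrreducibleRep (ρ.comp H.subtype) := by
  refine ⟨hirr.1, fun W hW => ?_⟩
  have hW' : ∀ h ∈ H, ∀ v ∈ W, ρ h v ∈ W := fun h hh v hv => hW ⟨h, hh⟩ v hv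
  obtain ⟨s, hs⟩ : ∃ s, s ∉ H := by
    by_contra! hcon
    have : H = ⊤ := (Subgroup.eq_top_iff' H).2 hcon
    simp [this] at hH
  have mem2 : ∀ {a b : G}, a ∉ H → b ∉ H → a * b ∈ H := fun {a b} ha hb =>
    (Subgroup.mul_mem_iff_of_index_two hH).2 (by tauto)
  have hsi : s⁻¹ ∉ H := fun h => hs (by simpa using h)
  have hmulapp : ∀ (a b : G) (v : V), ρ a (ρ b v) = ρ (a * b) v := fun a b v => by simp
  -- the translate of W
  let W' : Submodule ℂ V := W.comap (ρ s⁻¹)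
  have hmemW' : ∀ v, v ∈ W' ↔ ρ s⁻¹ v ∈ W := fun v => Iff.rfl
  have key1 : ∀ g, g ∉ H → ∀ v ∈ W, ρ g v ∈ W' := fun g hg v hv => by
    rw [hmemW', hmulapp]; exact hW' _ (mem2 hsi hg) _ hv
  have key2 : ∀ g, g ∉ H → ∀ v ∈ W', ρ g v ∈ W := fun g hg v hv => by
    have := hW' _ (mem2 hg hs) _ hv
    rwa [hmulapp, mul_assoc, mul_inv_cancel, mul_one] at this
  have key3 : ∀ g, g ∈ H → ∀ v ∈ W', ρ g v ∈ W' := fun g hg v hv => by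
    have hgs : g * s ∉ H := fun h => hs ((Subgroup.mul_mem_cancel_left H hg).1 h)
    have := hW' _ (mem2 hsi hgs) _ hv
    rw [hmulapp] at this
    rw [hmemW', hmulapp]
    simpa [mul_assoc] using this
  have hinf : W ⊓ W' = ⊥ ∨ W ⊓ W' = ⊤ := by
    refine hirr.2 _ fun g v hv => ?_
    by_cases hg : g ∈ H
    · exact ⟨hW' g hg v hv.1, key3 g hg v hv.2⟩
    · exact ⟨key2 g hg v hv.2, key1 g hg v hv.1⟩
  have hsup : W ⊔ W' = ⊥ ∨ W ⊔ W' = ⊤ := by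
    refine hirr.2 _ fun g v hv => ?_
    obtain ⟨x, hx, y, hy, rfl⟩ := Submodule.mem_sup.1 hv
    rw [map_add]
    by_cases hg : g ∈ H
    · exact Submodule.add_mem_sup (hW' g hg x hx) (key3 g hg y hy)
    · rw [add_comm]
      exact Submodule.add_mem_sup (key2 g hg y hy) (key1 g hg x hx)
  rcases hinf with hinf | hinf
  swap
  · right; exact top_unique (hinf ▸ inf_le_left)
  rcases hsup with hsup | hsup
  · left; exact bot_unique (hsup ▸ le_sup_left)
  exfalso
  have hle1 : Module.finrank ℂ W ≤ Module.finrank ℂ W' := by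
    refine LinearMap.finrank_le_finrank_of_injective
      (f := (ρ s).restrict (key1 s hs)) fun x y hxy => ?_
    have h := congrArg (fun z : W' => ρ s⁻¹ (z : V)) hxy
    simpa using h
  have hle2 : Module.finrank ℂ W' ≤ Module.finrank ℂ W := by
    refine LinearMap.finrank_le_finrank_of_injective
      (f := (ρ s⁻¹).restrict (key2 s⁻¹ hsi)) fun x y hxy => ?_
    have h := congrArg (fun z : W => ρ s (z : V)) hxy
    simpa using h
  have hd := Submodule.finrank_sup_add_finrank_inf_eq W W'
  rw [hinf, hsup, finrank_top, finrank_bot] at hd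
  obtain ⟨m, hm⟩ := hodd
  omega

/-- Induction over the exponent. -/
theorem restriction_irreducible_aux (k : ℕ) : ∀ (G : Type*) [Group G] [Finite G]
    (N : Subgroup G) [N.Normal] (_ : N.index = 2 ^ k)
    (V : Type*) [AddCommGroup V] [Module ℂ V] [FiniteDimensional ℂ V]
    (ρ : Representation ℂ G V)
    (_ : IsIrreducibleRep ρ) (_ : Odd (Module.finrank ℂ V)),
    IsIrreducibleRep (ρ.comp N.subtype) := by
  induction k with
  | zero =>
    intro G _ _ N _ hN V _ _ _ ρ hirr _
    have hT : N = ⊤ := by simpa using hN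
    subst hT
    exact ⟨hirr.1, fun W hW => hirr.2 W fun g v hv => hW ⟨g, trivial⟩ v hv⟩
  | succ k ih =>
    intro G _ _ N _ hN V _ _ _ ρ hirr hodd
    have hcard : Nat.card (G ⧸ N) = 2 ^ (k + 1) := hN
    haveI : Fact (Nat.Prime 2) := ⟨Nat.prime_two⟩
    obtain ⟨K, hK⟩ := Sylow.exists_subgroup_card_pow_prime (G := G ⧸ N) 2 (n := k)
      (by rw [hcard]; exact pow_dvd_pow 2 (Nat.le_succ k))
    have hKi : K.index = 2 := by
      have h := K.card_mul_index
      rw [hK, hcard, pow_succ] at h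
      exact Nat.eq_of_mul_eq_mul_left (by positivity) h
    let H : Subgroup G := K.comap (QuotientGroup.mk' N)
    have hHi : H.index = 2 := by
      rw [← hKi]; exact K.index_comap_of_surjective (QuotientGroup.mk'_surjective N)
    have hNH : N ≤ H := by
      intro n hn
      have : QuotientGroup.mk' N n = 1 := (QuotientGroup.eq_one_iff n).2 hn
      change QuotientGroup.mk' N n ∈ K
      rw [this]; exact K.one_mem
    have hrel : (N.subgroupOf H).index = 2 ^ k := by
      have h := Subgroup.relIndex_mul_index hNH
      rw [hHi, hN, pow_succ] at h
      exact Nat.eq_of_mul_eq_mul_right (by norm_num) h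
    have h1 := ih H (N.subgroupOf H) hrel V (ρ.comp H.subtype)
      (irreducible_index_two H hHi ρ hirr hodd) hodd
    exact ⟨h1.1, fun W hW => h1.2 W fun g v hv => hW ⟨g.1.1, g.2⟩ v hv⟩

/-- Let `G` be a finite group, `N` a normal subgroup of index a power of 2, and `V` a
finite-dimensional complex representation of `G` that is irreducible of odd dimension.
Then the restriction of `V` to `N` is irreducible. -/
theorem restriction_irreducible_of_odd_dim (G : Type*) [Group G] [Finite G]
    (N : Subgroup G) [N.Normal] (hN : ∃ k : ℕ, N.index = 2 ^ k)
    (V : Type*) [AddCommGroup V] [Module ℂ V] [FiniteDimensional ℂ V]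
    (ρ : Representation ℂ G V)
    (hirr : IsIrreducibleRep ρ) (hodd : Odd (Module.finrank ℂ V)) :
    IsIrreducibleRep (ρ.comp N.subtype) := by
  obtain ⟨k, hk⟩ := hN
  exact restriction_irreducible_aux k G N hk V ρ hirr hodd
end
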